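/- (Strict subadditivity for h > 1.) Suppose h > 1 and let d₁, d₂ be positive integers such that both infima are attained, i.e. there exist φ₁ ∈ 𝒜_h(d₁) with E_h(φ₁) = ℰ_h(d₁) and φ₂ ∈ 𝒜_h(d₂) with E_h(φ₂) = ℰ_h(d₂). Then ℰ_h(d₁ + d₂) < ℰ_h(d₁) + ℰ_h(d₂). -/

import Mathlib

/-! For `h > 1` all limits of admissible phases are multiples of `2π`, and `f = 1 - cos φ ≥ 0`
satisfies `W_h(φ) ≥ (h - 1) f`, so `f` is integrable. Two phases that are constant on the inner side
of disjoint transition regions glue additively, except that the stray-field energy drops by the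
positive interaction `∬ f₁(s) f₂(t) / (s - t)²` (`energy_glue`). Transitions at distance of order `a`
therefore gain an energy of order `1/a²` (`interaction_ge`, `Einf_add_le`).

Minimizers are not constant near infinity, so each is first cut off on `[a, a + 1]`
(`exists_trunc`). In terms of `f` the cutoff is multiplication by `cos² β`, realized on the phase as
`u ↦ 2 arcsin (cos β · sin (u/2))`. The anisotropy does not increase, and by a localization identity
(`localization_ineq`) the `H^{1/2}` energy grows only by an integral of
`f(s) f(t) (sin β(s) - sin β(t))² / (s - t)²`. As `f` is integrable, this is a small multiple of the
mass of `f` in the tail (`nonloc_trunc_le`), hence absorbed by the tail of the local energy, which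
the cutoff removes. With `T a` the local energy to the right of `a`, the cost of truncation is thus
at most `K (T a - T (a + 1)) - T (a + 1) / 4`.

No decay rate of the minimizers is needed: if gluing never paid off, then
`c / (2a + R)² + T (a + 1) / 4 ≤ K (T a - T (a + 1))` would hold for all large `a`. Dropping the first
term forces `T` to decay geometrically, which contradicts the inequality with the first term kept
(`no_decay`). -/

open Real MeasureTheory Filter Topology
open scoped ENNReal NNReal

noncomputable section

/-- `k = min {h, 1}`. -/
def kparam (h : ℝ) : ℝ := min h 1

/-- `α = arccos k ∈ [0, π/2]`. -/
def alphaParam (h : ℝ) : ℝ := Real.arccos (kparam h)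

/-- The anisotropy potential `W_h(θ) = (1/2)(cos²θ − 2h cos θ + 2hk − k²)`. -/
def Wpot (h θ : ℝ) : ℝ :=
  (1/2) * ((Real.cos θ)^2 - 2*h*Real.cos θ + 2*h*(kparam h) - (kparam h)^2)

/-- The set `2πℤ + {−α, α}` of allowed limits at `±∞`. -/
def limSet (h : ℝ) : Set ℝ :=
  {y | ∃ n : ℤ, y = 2*Real.pi*n + alphaParam h ∨ y = 2*Real.pi*n - alphaParam h}

/-- The total energy `E_h(φ)`, valued in `[0, ∞]`:
exchange + anisotropy energy plus the stray-field (homogeneous `H^{1/2}`) energy. -/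
def energy (h : ℝ) (φ : ℝ → ℝ) : ℝ≥0∞ :=
  ENNReal.ofReal (1/2) *
      (∫⁻ x : ℝ, ENNReal.ofReal ((deriv φ x)^2 + 2 * Wpot h (φ x))) +
    ENNReal.ofReal (1/(4*Real.pi)) *
      (∫⁻ s : ℝ, ∫⁻ t : ℝ,
        ENNReal.ofReal ((Real.cos (φ s) - Real.cos (φ t))^2 / (s - t)^2))

/-- An admissible phase: `C¹`, limits at `±∞` in `2πℤ + {−α, α}`, finite energy. -/
def Admissible (h : ℝ) (φ : ℝ → ℝ) : Prop :=
  ContDiff ℝ 1 φ ∧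
    (∃ L ∈ limSet h, Tendsto φ atTop (𝓝 L)) ∧
    (∃ L ∈ limSet h, Tendsto φ atBot (𝓝 L)) ∧
    energy h φ < ⊤

/-- The winding number `deg(φ) = (φ(+∞) − φ(−∞))/(2π)`. -/
def deg (φ : ℝ → ℝ) : ℝ :=
  (limUnder atTop φ - limUnder atBot φ) / (2*Real.pi)

/-- `𝒜_h(d)`: admissible phases of winding number `d`. -/
def AA (h d : ℝ) : Set (ℝ → ℝ) := {φ | Admissible h φ ∧ deg φ = d}

/-- `ℰ_h(d) = inf {E_h(φ) : φ ∈ 𝒜_h(d)}`. -/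
def Einf (h d : ℝ) : ℝ≥0∞ := ⨅ φ ∈ AA h d, energy h φ

/-- `D_α = {n + j·α/π : n ∈ ℤ, j ∈ {−1, 0, 1}}`. -/
def Dset (h : ℝ) : Set ℝ :=
  {d | ∃ n j : ℤ, (j = -1 ∨ j = 0 ∨ j = 1) ∧ d = n + j * alphaParam h / Real.pi}

/-! ### Density and nonlocal part of the energy -/

/-- Twice the local (exchange plus anisotropy) energy density of a phase. -/
def dens (h : ℝ) (φ : ℝ → ℝ) (x : ℝ) : ℝ≥0∞ :=
  ENNReal.ofReal ((deriv φ x)^2 + 2 * Wpot h (φ x))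

/-- The squared homogeneous `H^{1/2}` seminorm (Gagliardo form) of `cos ∘ φ`. -/
def nonloc (φ : ℝ → ℝ) : ℝ≥0∞ :=
  ∫⁻ s : ℝ, ∫⁻ t : ℝ, ENNReal.ofReal ((Real.cos (φ s) - Real.cos (φ t))^2 / (s - t)^2)

lemma energy_eq (h : ℝ) (φ : ℝ → ℝ) :
    energy h φ = ENNReal.ofReal (1/2) * (∫⁻ x, dens h φ x) +
      ENNReal.ofReal (1/(4*Real.pi)) * nonloc φ := rfl

lemma Wpot_eq {h : ℝ} (hh : 1 < h) (θ : ℝ) :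
    Wpot h θ = (1/2) * ((1 - Real.cos θ) * (2*(h-1) + (1 - Real.cos θ))) := by
  have : kparam h = 1 := min_eq_right hh.le
  rw [Wpot, this]; ring

lemma one_sub_cos_nonneg (θ : ℝ) : 0 ≤ 1 - Real.cos θ := by
  linarith [Real.cos_le_one θ]

lemma Wpot_nonneg {h : ℝ} (hh : 1 < h) (θ : ℝ) : 0 ≤ Wpot h θ := by
  rw [Wpot_eq hh]
  have := one_sub_cos_nonneg θ
  have : 0 < h - 1 := by linarith
  positivity

lemma le_Wpot {h : ℝ} (hh : 1 < h) (θ : ℝ) : (h-1) * (1 - Real.cos θ) ≤ Wpot h θ := by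
  rw [Wpot_eq hh]
  nlinarith [sq_nonneg (1 - Real.cos θ)]

/-- For `h > 1` the potential increases with `1 - cos θ`. -/
lemma Wpot_mono {h : ℝ} (hh : 1 < h) {θ η : ℝ} (hc : Real.cos η ≤ Real.cos θ) :
    Wpot h θ ≤ Wpot h η := by
  rw [Wpot_eq hh, Wpot_eq hh]
  have h1 := one_sub_cos_nonneg θ
  have h2 := one_sub_cos_nonneg η
  have h3 : 0 < h - 1 := by linarith
  gcongr

lemma limSet_eq {h : ℝ} (hh : 1 < h) {y : ℝ} (hy : y ∈ limSet h) :
    ∃ n : ℤ, y = 2 * Real.pi * n := by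
  have : alphaParam h = 0 := by
    rw [alphaParam, kparam, min_eq_right hh.le, Real.arccos_one]
  obtain ⟨n, hn | hn⟩ := hy <;> exact ⟨n, by rw [hn, this]; ring⟩

lemma mem_limSet {h : ℝ} (hh : 1 < h) (n : ℤ) : 2 * Real.pi * n ∈ limSet h := by
  have : alphaParam h = 0 := by
    rw [alphaParam, kparam, min_eq_right hh.le, Real.arccos_one]
  exact ⟨n, Or.inl (by rw [this]; ring)⟩

lemma cos_two_pi_mul_int (n : ℤ) : Real.cos (2 * Real.pi * n) = 1 := by
  rw [mul_comm]; exact Real.cos_int_mul_two_pi n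

lemma measurable_dens (h : ℝ) {φ : ℝ → ℝ} (hφ : ContDiff ℝ 1 φ) : Measurable (dens h φ) := by
  have h1 := hφ.continuous_deriv le_rfl
  have h2 := hφ.continuous
  unfold dens Wpot
  apply ENNReal.measurable_ofReal.comp
  apply Continuous.measurable
  fun_prop

lemma measurable_nonloc_integrand {φ : ℝ → ℝ} (hφ : Continuous φ) :
    Measurable fun p : ℝ × ℝ =>
      ENNReal.ofReal ((Real.cos (φ p.1) - Real.cos (φ p.2))^2 / (p.1 - p.2)^2) := by
  have : Measurable φ := hφ.measurable
  fun_prop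

lemma two_mul_one_sub_cos_le_dens {h : ℝ} (hh : 1 < h) (φ : ℝ → ℝ) (x : ℝ) :
    ENNReal.ofReal (2*(h-1)) * ENNReal.ofReal (1 - Real.cos (φ x)) ≤ dens h φ x := by
  rw [← ENNReal.ofReal_mul (by linarith), dens]
  apply ENNReal.ofReal_le_ofReal
  nlinarith [le_Wpot hh (φ x), sq_nonneg (deriv φ x)]

lemma lintegral_dens_ne_top {h : ℝ} {φ : ℝ → ℝ} (hE : energy h φ < ⊤) :
    ∫⁻ x, dens h φ x ≠ ⊤ := by
  rw [energy_eq] at hE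
  have := (ENNReal.add_lt_top.1 hE).1
  intro h0
  rw [h0, ENNReal.mul_top (by norm_num)] at this
  exact lt_irrefl _ this

/-- The energy is invariant under `φ ↦ -φ(c - ·)`. -/
lemma energy_reflect (h : ℝ) (φ : ℝ → ℝ) (c : ℝ) :
    energy h (fun x => -φ (c - x)) = energy h φ := by
  rw [energy_eq, energy_eq]
  congr 2
  · rw [← lintegral_sub_left_eq_self (dens h φ) c]
    refine lintegral_congr fun x => ?_
    have : deriv (fun x => -φ (c - x)) x = deriv φ (c - x) := by
      rw [deriv.fun_neg, deriv_comp_const_sub]; ring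
    simp only [dens, this, Wpot, Real.cos_neg]
  · unfold nonloc
    rw [← lintegral_sub_left_eq_self (fun s => ∫⁻ t : ℝ, ENNReal.ofReal
      ((Real.cos (φ s) - Real.cos (φ t))^2 / (s - t)^2)) c]
    refine lintegral_congr fun s => ?_
    rw [← lintegral_sub_left_eq_self (fun t => ENNReal.ofReal
      ((Real.cos (φ (c - s)) - Real.cos (φ t))^2 / (c - s - t)^2)) c]
    refine lintegral_congr fun t => ?_
    simp only [Real.cos_neg]
    congr 2; ring

/-- The energy is invariant under translations. -/
lemma energy_translate (h : ℝ) (φ : ℝ → ℝ) (c : ℝ) :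
    energy h (fun x => φ (x + c)) = energy h φ := by
  have h1 := energy_reflect h (fun x => -φ (c - x)) 0
  rw [energy_reflect h φ c] at h1
  rw [← h1]
  congr 1
  funext x
  simp only [neg_neg]
  congr 1; ring

/-! ### Gluing two transitions -/

/-- If `p` is constant (in `2πℤ`) on `(-1, ∞)` and `q` on `(-∞, 1)`, the energies of `p` and `q`
add up in `p + q`, apart from an attractive nonlocal interaction between the two supports. -/
lemma energy_glue {h : ℝ} (hh : 1 < h) {p q : ℝ → ℝ} (hp : ContDiff ℝ 1 p)
    (hq : ContDiff ℝ 1 q) (n m : ℤ) (hpn : ∀ x, -1 < x → p x = 2 * Real.pi * n)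
    (hqm : ∀ x, x < 1 → q x = 2 * Real.pi * m) :
    energy h (fun x => p x + q x) + ENNReal.ofReal (1/(4*Real.pi)) * (∫⁻ s : ℝ, ∫⁻ t : ℝ,
        ENNReal.ofReal (((1 - Real.cos (p s)) * (1 - Real.cos (q t))) / (s - t)^2)) ≤
      energy h p + energy h q := by
  have cosl : ∀ x, x < 1 → Real.cos (p x + q x) = Real.cos (p x) := by
    intro x hx
    rw [hqm x hx, show 2 * Real.pi * (m:ℝ) = m * (2 * Real.pi) by ring,
      Real.cos_add_int_mul_two_pi]
  have cosr : ∀ x, -1 < x → Real.cos (p x + q x) = Real.cos (q x) := by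
    intro x hx
    rw [hpn x hx, add_comm, show 2 * Real.pi * (n:ℝ) = n * (2 * Real.pi) by ring,
      Real.cos_add_int_mul_two_pi]
  have dp : Differentiable ℝ p := hp.differentiable one_ne_zero
  have dq : Differentiable ℝ q := hq.differentiable one_ne_zero
  have hloc : ∀ x, dens h (fun x => p x + q x) x = dens h p x + dens h q x := by
    intro x
    have hd : deriv (fun x => p x + q x) x = deriv p x + deriv q x :=
      deriv_fun_add (dp x) (dq x)
    rcases lt_or_ge x 1 with hx | hx
    · have h1 : deriv q x = 0 := by
        have : q =ᶠ[𝓝 x] fun _ => 2 * Real.pi * m := by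
          filter_upwards [Iio_mem_nhds hx] with y hy using hqm y hy
        rw [this.deriv_eq, deriv_const]
      simp only [dens, hd, h1, Wpot_eq hh, cosl x hx]
      rw [hqm x hx, cos_two_pi_mul_int]
      simp
    · have hx' : -1 < x := by linarith
      have h1 : deriv p x = 0 := by
        have : p =ᶠ[𝓝 x] fun _ => 2 * Real.pi * n := by
          filter_upwards [Ioi_mem_nhds hx'] with y hy using hpn y hy
        rw [this.deriv_eq, deriv_const]
      simp only [dens, hd, h1, Wpot_eq hh, cosr x hx']
      rw [hpn x hx', cos_two_pi_mul_int]
      simp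
  have hnon : ∀ s t, ENNReal.ofReal ((Real.cos (p s + q s) - Real.cos (p t + q t))^2 / (s - t)^2) +
      ENNReal.ofReal (((1 - Real.cos (p s)) * (1 - Real.cos (q t))) / (s - t)^2) ≤
      ENNReal.ofReal ((Real.cos (p s) - Real.cos (p t))^2 / (s - t)^2) +
      ENNReal.ofReal ((Real.cos (q s) - Real.cos (q t))^2 / (s - t)^2) := by
    intro s t
    have a1 := one_sub_cos_nonneg (p s)
    have a2 := one_sub_cos_nonneg (p t)
    have a3 := one_sub_cos_nonneg (q s)
    have a4 := one_sub_cos_nonneg (q t)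
    rw [← ENNReal.ofReal_add (by positivity) (by positivity),
      ← ENNReal.ofReal_add (by positivity) (by positivity), ← add_div, ← add_div]
    apply ENNReal.ofReal_le_ofReal
    apply div_le_div_of_nonneg_right _ (sq_nonneg _)
    have key : ∀ x, (Real.cos (p x) = 1 ∧ Real.cos (p x + q x) = Real.cos (q x)) ∨
        (Real.cos (q x) = 1 ∧ Real.cos (p x + q x) = Real.cos (p x)) := by
      intro x
      rcases lt_or_ge x 1 with hx | hx
      · exact Or.inr ⟨by rw [hqm x hx, cos_two_pi_mul_int], cosl x hx⟩
      · exact Or.inl ⟨by rw [hpn x (by linarith), cos_two_pi_mul_int], cosr x (by linarith)⟩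
    rcases key s with ⟨h1, h2⟩ | ⟨h1, h2⟩ <;> rcases key t with ⟨h3, h4⟩ | ⟨h3, h4⟩ <;>
      rw [h2, h4, h1, h3] <;>
      nlinarith [mul_nonneg a1 a4, mul_nonneg a2 a3, mul_nonneg a1 a3, mul_nonneg a2 a4]
  have mnl := measurable_nonloc_integrand (φ := fun x => p x + q x) (hp.add hq).continuous
  have mp := measurable_nonloc_integrand hp.continuous
  have mul_int : nonloc (fun x => p x + q x) + (∫⁻ s : ℝ, ∫⁻ t : ℝ,
      ENNReal.ofReal (((1 - Real.cos (p s)) * (1 - Real.cos (q t))) / (s - t)^2)) ≤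
      nonloc p + nonloc q := by
    unfold nonloc
    rw [← lintegral_add_left mnl.lintegral_prod_right', ← lintegral_add_left mp.lintegral_prod_right']
    refine lintegral_mono fun s => ?_
    have e1 := mnl.comp (measurable_prodMk_left (x := s))
    have e2 := mp.comp (measurable_prodMk_left (x := s))
    simp only [Function.comp_def] at e1 e2 ⊢
    rw [← lintegral_add_left e1, ← lintegral_add_left e2]
    exact lintegral_mono fun t => hnon s t
  rw [energy_eq, energy_eq, energy_eq, lintegral_congr hloc,
    lintegral_add_left (measurable_dens h hp), add_assoc, ← mul_add]
  refine (add_le_add_right (mul_le_mul_right mul_int _) _).trans (le_of_eq ?_)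
  ring

/-! ### The cutoff and its nonlocal cost -/

/-- A smooth angle increasing from `0` (for `x ≤ a`) to `π/2` (for `x ≥ a + 1`). Its cosine serves
as a cutoff, so that both the cutoff and the root of one minus its square are smooth. -/
def cutAngle (a x : ℝ) : ℝ := Real.pi / 2 * Real.smoothTransition (x - a)

lemma cutAngle_of_le {a x : ℝ} (hx : x ≤ a) : cutAngle a x = 0 := by
  rw [cutAngle, Real.smoothTransition.zero_of_nonpos (by linarith), mul_zero]

lemma cutAngle_of_ge {a x : ℝ} (hx : a + 1 ≤ x) : cutAngle a x = Real.pi / 2 := by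
  rw [cutAngle, Real.smoothTransition.one_of_one_le (by linarith), mul_one]

lemma cutAngle_nonneg (a x : ℝ) : 0 ≤ cutAngle a x :=
  mul_nonneg (by positivity) (Real.smoothTransition.nonneg _)

lemma cutAngle_le (a x : ℝ) : cutAngle a x ≤ Real.pi / 2 :=
  mul_le_of_le_one_right (by positivity) (Real.smoothTransition.le_one _)

lemma contDiff_cutAngle (a : ℝ) : ContDiff ℝ 1 (cutAngle a) := by
  have : ContDiff ℝ ((1 : ℕ∞) : WithTop ℕ∞) Real.smoothTransition := Real.smoothTransition.contDiff
  have h2 : ContDiff ℝ 1 Real.smoothTransition := this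
  unfold cutAngle
  exact contDiff_const.mul (h2.comp (contDiff_id.sub contDiff_const))

lemma exists_deriv_cutAngle_bound : ∃ M : ℝ, 0 < M ∧ ∀ a x, |deriv (cutAngle a) x| ≤ M := by
  have hc := (contDiff_cutAngle 0).continuous_deriv le_rfl
  obtain ⟨M, hM⟩ := isCompact_Icc.exists_bound_of_continuousOn (s := Set.Icc (0:ℝ) 1) hc.continuousOn
  have h0 : ∀ x, |deriv (cutAngle 0) x| ≤ max M 1 := by
    intro x
    by_cases hx : x ∈ Set.Icc (0:ℝ) 1
    · exact (hM x hx).trans (le_max_left _ _)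
    · have : deriv (cutAngle 0) x = 0 := by
        simp only [Set.mem_Icc, not_and_or, not_le] at hx
        rcases hx with hx | hx
        · have : cutAngle 0 =ᶠ[𝓝 x] fun _ => 0 := by
            filter_upwards [Iio_mem_nhds hx] with y hy using cutAngle_of_le (le_of_lt hy)
          rw [this.deriv_eq, deriv_const]
        · have : cutAngle 0 =ᶠ[𝓝 x] fun _ => Real.pi / 2 := by
            filter_upwards [Ioi_mem_nhds hx] with y hy
            exact cutAngle_of_ge (by simpa using le_of_lt hy)
          rw [this.deriv_eq, deriv_const]
      rw [this, abs_zero]; positivity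
  refine ⟨max M 1, by positivity, fun a x => ?_⟩
  have : cutAngle a = fun x => cutAngle 0 (x - a) := by
    funext y; simp [cutAngle]
  rw [this, deriv_comp_sub_const]
  exact h0 _

/-- Pointwise localization estimate behind `nonloc_trunc_le`: cutting `f` off by the factor
`1 - w²` costs only a term proportional to the product of the two values of `f`. -/
lemma localization_ineq {f g v w : ℝ} (hf : 0 ≤ f) (hg : 0 ≤ g) (hv : 0 ≤ v) (hv1 : v ≤ 1)
    (hw : 0 ≤ w) (hw1 : w ≤ 1) :
    (f * (1 - v^2) - g * (1 - w^2))^2 ≤ (f - g)^2 + 4 * (f * g * (v - w)^2) := by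
  -- The difference of the two squares is `-2 (f v - g w)² + 2 f g (v - w)² + (f v² - g w²)²`.
  have key : (f * v^2 - g * w^2)^2 ≤ 2 * (f * v - g * w)^2 + 2 * (f * g * (v - w)^2) := by
    rcases le_total (g * w) (f * v) with hle | hle
    · have e : f * v^2 - g * w^2 = v * (f * v - g * w) + g * w * (v - w) := by ring
      have h1 : (v * (f * v - g * w))^2 ≤ (f * v - g * w)^2 := by
        rw [mul_pow]; exact mul_le_of_le_one_left (sq_nonneg _) (pow_le_one₀ hv hv1)
      have h2 : (g * w * (v - w))^2 ≤ f * g * (v - w)^2 := by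
        rw [mul_pow]
        apply mul_le_mul_of_nonneg_right _ (sq_nonneg _)
        have : g * w ≤ f := hle.trans (mul_le_of_le_one_right hf hv1)
        have : g * w ≤ g := mul_le_of_le_one_right hg hw1
        have : 0 ≤ g * w := mul_nonneg hg hw
        nlinarith
      rw [e]
      nlinarith [sq_nonneg (v * (f * v - g * w) - g * w * (v - w))]
    · have e : f * v^2 - g * w^2 = w * (f * v - g * w) + f * v * (v - w) := by ring
      have h1 : (w * (f * v - g * w))^2 ≤ (f * v - g * w)^2 := by
        rw [mul_pow]; exact mul_le_of_le_one_left (sq_nonneg _) (pow_le_one₀ hw hw1)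
      have h2 : (f * v * (v - w))^2 ≤ f * g * (v - w)^2 := by
        rw [mul_pow]
        apply mul_le_mul_of_nonneg_right _ (sq_nonneg _)
        have : f * v ≤ g := hle.trans (mul_le_of_le_one_right hg hw1)
        have : f * v ≤ f := mul_le_of_le_one_right hf hv1
        have : 0 ≤ f * v := mul_nonneg hf hv
        nlinarith
      rw [e]
      nlinarith [sq_nonneg (w * (f * v - g * w) - f * v * (v - w))]
  have e : (f * (1 - v^2) - g * (1 - w^2))^2 = (f - g)^2 - 2 * (f * v - g * w)^2
      + 2 * (f * g * (v - w)^2) + (f * v^2 - g * w^2)^2 := by ring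
  linarith

/-- The convolution of an integrable function with `min (M², 1/z²)` vanishes at `+∞`. -/
lemma tendsto_kernel {F : ℝ → ℝ≥0∞} (hF : Measurable F) (hfinite : ∫⁻ s, F s ≠ ⊤) (M : ℝ) :
    Tendsto (fun t : ℝ => ∫⁻ s, F s * ENNReal.ofReal (min (M^2) (1/(t - s)^2))) atTop (𝓝 0) := by
  have hfin : ∀ᵐ s, F s < ⊤ := ae_lt_top hF hfinite
  rw [← lintegral_zero (μ := (volume : Measure ℝ))]
  refine MeasureTheory.tendsto_lintegral_filter_of_dominated_convergence
    (fun s => F s * ENNReal.ofReal (M^2)) ?_ ?_ ?_ ?_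
  · filter_upwards with t
    fun_prop
  · filter_upwards with t
    filter_upwards with s
    gcongr
    exact min_le_left _ _
  · rw [lintegral_mul_const _ hF]
    exact ENNReal.mul_ne_top hfinite ENNReal.ofReal_ne_top
  · filter_upwards [hfin] with s hs
    have h1 : Tendsto (fun t : ℝ => min (M^2) (1/(t - s)^2)) atTop (𝓝 0) := by
      have h2 : Tendsto (fun t : ℝ => 1/(t - s)^2) atTop (𝓝 0) := by
        simp only [one_div]
        apply Tendsto.inv_tendsto_atTop
        apply (tendsto_pow_atTop two_ne_zero).comp
        exact tendsto_atTop_add_const_right _ _ tendsto_id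
      refine squeeze_zero (fun t => ?_) (fun t => min_le_right _ _) h2
      positivity
    have h3 := ENNReal.Tendsto.const_mul (ENNReal.tendsto_ofReal h1) (Or.inr hs.ne)
    simpa using h3

/-- Cutting the phase off far to the right raises the nonlocal energy by at most a small multiple
of the mass of `1 - cos φ` in the tail. -/
lemma nonloc_trunc_le {φ : ℝ → ℝ} (hφ : Continuous φ)
    (hfinite : ∫⁻ x, ENNReal.ofReal (1 - Real.cos (φ x)) ≠ ⊤) {ε : ℝ≥0∞} (hε : 0 < ε) :
    ∃ A : ℝ, ∀ a ≥ A, ∀ ψ : ℝ → ℝ,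
      (∀ x, 1 - Real.cos (ψ x) = (1 - Real.cos (φ x)) * (1 - Real.sin (cutAngle a x)^2)) →
      nonloc ψ ≤ nonloc φ + 8 * (ε * ∫⁻ x in Set.Ioi a, ENNReal.ofReal (1 - Real.cos (φ x))) := by
  obtain ⟨M, hM0, hM⟩ := exists_deriv_cutAngle_bound
  set F : ℝ → ℝ≥0∞ := fun x => ENNReal.ofReal (1 - Real.cos (φ x)) with hFdef
  have hφm : Measurable φ := hφ.measurable
  have hF : Measurable F := by fun_prop
  set K : ℝ → ℝ → ℝ≥0∞ := fun s t => ENNReal.ofReal (min (M^2) (1/(s - t)^2)) with hK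
  obtain ⟨A, hA⟩ := ((tendsto_kernel hF hfinite M).eventually (ge_mem_nhds hε)).exists_forall_of_atTop
  refine ⟨A, fun a ha ψ hψ => ?_⟩
  set G : ℝ → ℝ≥0∞ := (Set.Ioi a).indicator F with hG
  have hGm : Measurable G := hF.indicator measurableSet_Ioi
  have hKsymm : ∀ s t, K s t = K t s := fun s t => by
    simp only [hK]; rw [show (s - t)^2 = (t - s)^2 by ring]
  have hJ : ∫⁻ s, ∫⁻ t, G s * (F t * K s t) ≤ ε * ∫⁻ x in Set.Ioi a, F x := by
    rw [← lintegral_indicator measurableSet_Ioi, ← lintegral_const_mul _ hGm]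
    refine lintegral_mono fun s => ?_
    simp only
    rw [lintegral_const_mul _ (by simp only [hK]; fun_prop), mul_comm]
    by_cases hs : s ∈ Set.Ioi a
    · gcongr
      exact hA s (ha.le.trans (le_of_lt hs))
    · simp [hG, hs]
  have hJ' : ∫⁻ s, ∫⁻ t, G t * (F s * K s t) = ∫⁻ s, ∫⁻ t, G s * (F t * K s t) := by
    rw [lintegral_lintegral_swap]
    · refine lintegral_congr fun s => lintegral_congr fun t => ?_
      rw [hKsymm]
    · apply Measurable.aemeasurable
      simp only [hK, Function.uncurry_def]
      fun_prop
  have hLip : ∀ s t, |Real.sin (cutAngle a s) - Real.sin (cutAngle a t)| ≤ M * |s - t| := by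
    intro s t
    refine (Real.abs_sin_sub_sin_le _ _).trans ?_
    exact convex_univ.norm_image_sub_le_of_norm_deriv_le
      (fun x _ => ((contDiff_cutAngle a).differentiable one_ne_zero) x)
      (fun x _ => hM a x) (Set.mem_univ t) (Set.mem_univ s)
  have sin0 : ∀ x, 0 ≤ Real.sin (cutAngle a x) := fun x =>
    Real.sin_nonneg_of_nonneg_of_le_pi (cutAngle_nonneg a x)
      ((cutAngle_le a x).trans (by linarith [Real.pi_pos]))
  have hpt : ∀ s t, ENNReal.ofReal ((Real.cos (ψ s) - Real.cos (ψ t))^2 / (s - t)^2) ≤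
      ENNReal.ofReal ((Real.cos (φ s) - Real.cos (φ t))^2 / (s - t)^2) +
        4 * (G s * (F t * K s t) + G t * (F s * K s t)) := by
    intro s t
    set v := Real.sin (cutAngle a s)
    set w := Real.sin (cutAngle a t)
    have hf := one_sub_cos_nonneg (φ s)
    have hg := one_sub_cos_nonneg (φ t)
    have h1 := localization_ineq hf hg (sin0 s) (Real.sin_le_one _) (sin0 t) (Real.sin_le_one _)
    rw [← hψ s, ← hψ t] at h1
    have h2 : (Real.cos (ψ s) - Real.cos (ψ t))^2 / (s - t)^2 ≤
        (Real.cos (φ s) - Real.cos (φ t))^2 / (s - t)^2 +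
        4 * ((1 - Real.cos (φ s)) * (1 - Real.cos (φ t)) * ((v - w)^2 / (s - t)^2)) := by
      have := div_le_div_of_nonneg_right h1 (sq_nonneg (s - t))
      calc _ = (1 - Real.cos (ψ s) - (1 - Real.cos (ψ t)))^2 / (s - t)^2 := by ring
        _ ≤ _ := this
        _ = _ := by ring
    have hk : (v - w)^2 / (s - t)^2 ≤ min (M^2) (1/(s - t)^2) := by
      apply le_min
      · rcases eq_or_ne s t with rfl | hst
        · simp; positivity
        · have : 0 < (s - t)^2 := by have := sub_ne_zero.2 hst; positivity
          rw [div_le_iff₀ this, ← sq_abs, ← sq_abs (s - t), ← mul_pow]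
          exact pow_le_pow_left₀ (abs_nonneg _) (hLip s t) 2
      · apply div_le_div_of_nonneg_right _ (sq_nonneg _)
        have : v ≤ 1 := Real.sin_le_one _
        have : w ≤ 1 := Real.sin_le_one _
        have : 0 ≤ v := sin0 s
        have : 0 ≤ w := sin0 t
        nlinarith
    refine (ENNReal.ofReal_le_ofReal h2).trans ?_
    rw [ENNReal.ofReal_add (by positivity) (by positivity)]
    gcongr
    rw [ENNReal.ofReal_mul (by norm_num), ENNReal.ofReal_ofNat]
    gcongr
    rw [ENNReal.ofReal_mul (by positivity), ENNReal.ofReal_mul (by positivity)]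
    have hk' : ENNReal.ofReal ((v - w)^2 / (s - t)^2) ≤ K s t := ENNReal.ofReal_le_ofReal hk
    by_cases hs : s ∈ Set.Ioi a
    · refine le_trans ?_ le_self_add
      simp only [hG, Set.indicator_of_mem hs, ← mul_assoc]
      gcongr
    · by_cases ht : t ∈ Set.Ioi a
      · refine le_trans ?_ le_add_self
        simp only [hG, Set.indicator_of_mem ht, ← mul_assoc]
        rw [mul_comm (F t)]
        gcongr
      · have hv : v = 0 := by
          simp only [v, cutAngle_of_le (not_lt.1 hs), Real.sin_zero]
        have hw : w = 0 := by
          simp only [w, cutAngle_of_le (not_lt.1 ht), Real.sin_zero]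
        simp [hv, hw]
  have mφ := measurable_nonloc_integrand hφ
  have hKm : Measurable fun p : ℝ × ℝ => K p.1 p.2 := by simp only [hK]; fun_prop
  have m1 : Measurable fun p : ℝ × ℝ => G p.1 * (F p.2 * K p.1 p.2) := by fun_prop
  have m2 : Measurable fun p : ℝ × ℝ => G p.2 * (F p.1 * K p.1 p.2) := by fun_prop
  calc nonloc ψ ≤ ∫⁻ s, ∫⁻ t, (ENNReal.ofReal ((Real.cos (φ s) - Real.cos (φ t))^2 / (s - t)^2) +
        4 * (G s * (F t * K s t) + G t * (F s * K s t))) :=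
        lintegral_mono fun s => lintegral_mono fun t => hpt s t
    _ = nonloc φ + 4 * ((∫⁻ s, ∫⁻ t, G s * (F t * K s t)) + ∫⁻ s, ∫⁻ t, G t * (F s * K s t)) := by
        have i1 : Measurable fun s => ∫⁻ t, G s * (F t * K s t) := m1.lintegral_prod_right'
        have i2 : Measurable fun s => ∫⁻ t, G t * (F s * K s t) := m2.lintegral_prod_right'
        have i3 : Measurable fun s =>
            (∫⁻ t, G s * (F t * K s t)) + ∫⁻ t, G t * (F s * K s t) := i1.add i2
        rw [← lintegral_add_left i1, ← lintegral_const_mul _ i3, nonloc,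
          ← lintegral_add_left mφ.lintegral_prod_right']
        refine lintegral_congr fun s => ?_
        have e0 := mφ.comp (measurable_prodMk_left (x := s))
        have e1 := m1.comp (measurable_prodMk_left (x := s))
        have e2 := m2.comp (measurable_prodMk_left (x := s))
        simp only [Function.comp_def] at e0 e1 e2 ⊢
        rw [lintegral_add_left e0, lintegral_const_mul _ (by fun_prop), lintegral_add_left e1]
    _ ≤ nonloc φ + 4 * (ε * (∫⁻ x in Set.Ioi a, F x) + ε * ∫⁻ x in Set.Ioi a, F x) := by
        rw [hJ']; gcongr
    _ = _ := by ring

/-! ### Truncating a phase at its right limit -/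

/-- The bound `|φ - 2πn| ≤ 1` keeps the argument of `arcsin` in the truncation away from `±1`. -/
lemma sq_cut_le {β u : ℝ} (hu : |u| ≤ 1) : (Real.cos β * Real.sin (u/2))^2 ≤ 1/4 := by
  have h1 : |Real.sin (u/2)| ≤ 1/2 := by
    refine Real.abs_sin_le_abs.trans ?_
    rw [abs_div, abs_two]; linarith
  have h2 : Real.sin (u/2)^2 ≤ 1/4 := by
    rw [← sq_abs]; nlinarith [abs_nonneg (Real.sin (u/2))]
  rw [mul_pow]
  nlinarith [Real.cos_sq_le_one β, sq_nonneg (Real.cos β), sq_nonneg (Real.sin (u/2))]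

/-- The derivative of the truncated angle `2 arcsin (cos β · sin (u/2))` is controlled by `u'` and
by `1 - cos u`, the latter weighted with the slope of the cutoff angle `β`. -/
lemma cut_deriv {β u : ℝ → ℝ} {x β' u' M c : ℝ} (hβ : HasDerivAt β β' x) (hu : HasDerivAt u u' x)
    (hM : |β'| ≤ M) (hx : |u x| ≤ 1) :
    ∃ d, HasDerivAt (fun y => c + 2 * Real.arcsin (Real.cos (β y) * Real.sin (u y / 2))) d x ∧
      d^2 ≤ 3 * u'^2 + 6 * M^2 * (1 - Real.cos (u x)) := by
  set y := Real.cos (β x) * Real.sin (u x / 2) with hy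
  have hy2 : y^2 ≤ 1/4 := sq_cut_le hx
  have hY := (hβ.cos).mul ((hu.div_const 2).sin)
  set y' := -Real.sin (β x) * β' * Real.sin (u x / 2) + Real.cos (β x) * (Real.cos (u x / 2) * (u' / 2))
    with hy'
  have hA := (Real.hasDerivAt_arcsin (x := y) (by intro h; rw [h] at hy2; norm_num at hy2)
    (by intro h; rw [h] at hy2; norm_num at hy2)).comp x hY
  refine ⟨_, (hA.const_mul 2).const_add c, ?_⟩
  have hs : Real.sqrt (1 - y^2) ^ 2 = 1 - y^2 := Real.sq_sqrt (by linarith)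
  have hsin : Real.sin (u x / 2)^2 = (1 - Real.cos (u x)) / 2 := by
    rw [Real.sin_sq_eq_half_sub, mul_div_cancel₀ _ two_ne_zero]; ring
  have e : (2 * (1 / Real.sqrt (1 - y^2) * y'))^2 = 4 * y'^2 / (1 - y^2) := by
    rw [mul_pow, mul_pow, div_pow, hs]; ring
  rw [e, div_le_iff₀ (by linarith)]
  have hb : β'^2 ≤ M^2 := by rw [← sq_abs]; exact pow_le_pow_left₀ (abs_nonneg _) hM 2
  have h1 : (-Real.sin (β x) * β' * Real.sin (u x / 2))^2 ≤ M^2 * ((1 - Real.cos (u x)) / 2) := by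
    rw [← hsin, mul_pow, mul_pow, neg_sq]
    have := Real.sin_sq_le_one (β x)
    gcongr
    nlinarith [sq_nonneg β', sq_nonneg (Real.sin (β x))]
  have h2 : (Real.cos (β x) * (Real.cos (u x / 2) * (u' / 2)))^2 ≤ u'^2 / 4 := by
    have a1 := Real.cos_sq_le_one (β x)
    have a2 := Real.cos_sq_le_one (u x / 2)
    rw [mul_pow, mul_pow, div_pow]
    calc _ ≤ 1 * (1 * (u'^2 / 2^2)) := by gcongr
      _ = _ := by ring
  have h3 : y'^2 ≤ 2 * (M^2 * ((1 - Real.cos (u x)) / 2)) + 2 * (u'^2/4) := by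
    rw [hy']
    nlinarith [sq_nonneg (-Real.sin (β x) * β' * Real.sin (u x / 2) -
      Real.cos (β x) * (Real.cos (u x / 2) * (u' / 2)))]
  have h4 : 0 ≤ M^2 * (1 - Real.cos (u x)) := mul_nonneg (sq_nonneg _) (one_sub_cos_nonneg _)
  nlinarith [sq_nonneg u', mul_nonneg (sq_nonneg u') (by linarith : (0:ℝ) ≤ 1/4 - y^2),
    mul_nonneg h4 (by linarith : (0:ℝ) ≤ 1/4 - y^2)]

lemma lintegral_Ici_split (F : ℝ → ℝ≥0∞) (a : ℝ) :
    ∫⁻ x in Set.Ici a, F x = (∫⁻ x in Set.Icc a (a+1), F x) + ∫⁻ x in Set.Ici (a+1), F x := by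
  rw [← setLIntegral_congr (Ioi_ae_eq_Ici (a := a+1)), ← lintegral_union measurableSet_Ioi,
    Set.Icc_union_Ioi_eq_Ici (by linarith)]
  rw [Set.disjoint_left]
  intro x hx hx'
  exact absurd hx.2 (not_le.2 hx')

/-- Truncation: far to the right a phase can be replaced by its limit, saving a quarter of the tail
of the energy and paying a multiple of the energy in a transition layer of unit length. -/
lemma exists_trunc {h : ℝ} (hh : 1 < h) {φ : ℝ → ℝ} (hφ : ContDiff ℝ 1 φ) (hE : energy h φ < ⊤)
    (n : ℤ) (hL : Tendsto φ atTop (𝓝 (2 * Real.pi * n))) :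
    ∃ K : ℝ≥0, ∃ A : ℝ, ∀ a ≥ A, ∃ ψ : ℝ → ℝ, ContDiff ℝ 1 ψ ∧ (∀ x ≤ a, ψ x = φ x) ∧
      (∀ x, a + 1 ≤ x → ψ x = 2 * Real.pi * n) ∧
      energy h ψ + ENNReal.ofReal (1/4) * (∫⁻ x in Set.Ici (a+1), dens h φ x) ≤
        energy h φ + K * ∫⁻ x in Set.Icc a (a+1), dens h φ x := by
  obtain ⟨M, hM0, hM⟩ := exists_deriv_cutAngle_bound
  have hh' : 0 < h - 1 := by linarith
  have hdm := measurable_dens h hφ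
  have hφd : Differentiable ℝ φ := hφ.differentiable one_ne_zero
  have hmass : ∫⁻ x, ENNReal.ofReal (1 - Real.cos (φ x)) ≠ ⊤ := by
    intro h0
    have h1 := lintegral_mono (two_mul_one_sub_cos_le_dens hh φ) (μ := volume)
    have : Measurable φ := hφ.continuous.measurable
    rw [lintegral_const_mul _ (by fun_prop), h0, ENNReal.mul_top (by simpa using hh)] at h1
    exact lintegral_dens_ne_top hE (top_le_iff.1 h1)
  obtain ⟨A₁, hA₁⟩ := nonloc_trunc_le hφ.continuous hmass (ε := ENNReal.ofReal ((h-1)/8))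
    (by simpa using hh)
  obtain ⟨A₀, hA₀⟩ : ∃ A₀, ∀ x ≥ A₀, |φ x - 2 * Real.pi * n| ≤ 1 := by
    have := (Metric.tendsto_nhds.1 hL) 1 one_pos
    obtain ⟨A₀, hA₀⟩ := this.exists_forall_of_atTop
    exact ⟨A₀, fun x hx => by have := hA₀ x hx; rw [Real.dist_eq] at this; exact this.le⟩
  -- The density of the truncated phase is at most `K₀` times the original one in the layer.
  set K₀ : ℝ := 4 + 6 * M^2 / (h-1) with hK₀
  have hK₀pos : 0 ≤ K₀ := by positivity
  refine ⟨K₀.toNNReal + 1, max A₁ (A₀ + 1), fun a ha => ?_⟩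
  have haA₁ : A₁ ≤ a := (le_max_left _ _).trans ha
  have haA₀ : A₀ + 1 ≤ a := (le_max_right _ _).trans ha
  set g : ℝ → ℝ := fun x => 2 * Real.pi * n +
    2 * Real.arcsin (Real.cos (cutAngle a x) * Real.sin ((φ x - 2 * Real.pi * n) / 2)) with hg
  set ψ : ℝ → ℝ := fun x => if x ≤ a then φ x else g x with hψ
  have hψl : ∀ x ≤ a, ψ x = φ x := fun x hx => if_pos hx
  have hgφ : ∀ x, A₀ ≤ x → x ≤ a → g x = φ x := by
    intro x hx hxa
    have h1 := abs_le.1 (hA₀ x hx)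
    have hpi := Real.pi_gt_three
    simp only [hg, cutAngle_of_le hxa, Real.cos_zero, one_mul]
    rw [Real.arcsin_sin (by linarith) (by linarith)]
    ring
  have hψg : ∀ x, A₀ ≤ x → ψ x = g x := by
    intro x hx
    by_cases hxa : x ≤ a
    · rw [hψl x hxa, hgφ x hx hxa]
    · exact if_neg hxa
  have hψg' : ∀ x, A₀ < x → ψ =ᶠ[𝓝 x] g := fun x hx => by
    filter_upwards [Ioi_mem_nhds hx] with y hy using hψg y (le_of_lt hy)
  have hψφ' : ∀ x, x < a → ψ =ᶠ[𝓝 x] φ := fun x hx => by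
    filter_upwards [Iio_mem_nhds hx] with y hy using hψl y (le_of_lt hy)
  have hψr : ∀ x, a + 1 ≤ x → ψ x = 2 * Real.pi * n := by
    intro x hx
    rw [hψg x (by linarith), hg]
    simp [cutAngle_of_ge hx]
  have hψC : ContDiff ℝ 1 ψ := by
    rw [contDiff_iff_contDiffAt]
    intro x
    rcases lt_or_ge x a with hx | hx
    · exact hφ.contDiffAt.congr_of_eventuallyEq (hψφ' x hx)
    · refine ContDiffAt.congr_of_eventuallyEq ?_ (hψg' x (by linarith))
      have hy2 := sq_cut_le (β := cutAngle a x) (hA₀ x (by linarith))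
      have hin : ContDiffAt ℝ 1 (fun x => Real.cos (cutAngle a x) *
          Real.sin ((φ x - 2 * Real.pi * n) / 2)) x := by
        apply ContDiff.contDiffAt
        have := contDiff_cutAngle a
        fun_prop
      have harc : ContDiffAt ℝ 1 Real.arcsin
          (Real.cos (cutAngle a x) * Real.sin ((φ x - 2 * Real.pi * n) / 2)) :=
        Real.contDiffAt_arcsin (by intro h0; rw [h0] at hy2; norm_num at hy2)
          (by intro h0; rw [h0] at hy2; norm_num at hy2)
      exact contDiffAt_const.add (contDiffAt_const.mul
        (ContDiffAt.comp (g := Real.arcsin) x harc hin))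
  have hcosφ : ∀ x, Real.cos (φ x - 2 * Real.pi * n) = Real.cos (φ x) := fun x => by
    rw [show 2 * Real.pi * (n:ℝ) = n * (2 * Real.pi) by ring, Real.cos_sub_int_mul_two_pi]
  have hcos : ∀ x, 1 - Real.cos (ψ x) =
      (1 - Real.cos (φ x)) * (1 - Real.sin (cutAngle a x)^2) := by
    intro x
    by_cases hxa : x ≤ a
    · rw [hψl x hxa, cutAngle_of_le hxa]; simp
    · have hx0 : A₀ ≤ x := by linarith
      have hy2 := sq_cut_le (β := cutAngle a x) (hA₀ x hx0)
      have hy := abs_le.1 (abs_le_of_sq_le_sq (hy2.trans (by norm_num : (1:ℝ)/4 ≤ 1^2)) one_pos.le)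
      rw [hψg x hx0, hg]
      simp only
      rw [show 2 * Real.pi * (n:ℝ) = n * (2 * Real.pi) by ring, add_comm,
        Real.cos_add_int_mul_two_pi, ← show 2 * Real.pi * (n:ℝ) = n * (2 * Real.pi) by ring,
        Real.cos_two_mul, Real.cos_sq', Real.sin_arcsin hy.1 hy.2, mul_pow,
        Real.sin_sq_eq_half_sub, mul_div_cancel₀ _ two_ne_zero, hcosφ, ← Real.cos_sq']
      ring
  have hdl : ∀ x ∈ Set.Iio a, dens h ψ x ≤ dens h φ x := by
    intro x hx
    rw [dens, dens, (hψφ' x hx).deriv_eq, hψl x (le_of_lt hx)]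
  have hdm' : ∀ x ∈ Set.Icc a (a+1), dens h ψ x ≤ ENNReal.ofReal K₀ * dens h φ x := by
    intro x hx
    have hx0 : A₀ < x := by linarith [hx.1]
    obtain ⟨d, hd, hd2⟩ := cut_deriv (c := 2 * Real.pi * n)
      ((contDiff_cutAngle a).differentiable one_ne_zero x).hasDerivAt
      ((hφd x).hasDerivAt.sub_const (2 * Real.pi * n)) (hM a x) (hA₀ x hx0.le)
    rw [hcosφ] at hd2
    have hd' : deriv ψ x = d := by rw [(hψg' x hx0).deriv_eq]; exact hd.deriv
    rw [dens, dens, hd', ← ENNReal.ofReal_mul hK₀pos]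
    apply ENNReal.ofReal_le_ofReal
    have hf := one_sub_cos_nonneg (φ x)
    have hW : Wpot h (ψ x) ≤ Wpot h (φ x) := by
      apply Wpot_mono hh
      have := hcos x
      nlinarith [sq_nonneg (Real.sin (cutAngle a x))]
    have hWφ := le_Wpot hh (φ x)
    have h1 : 6 * M^2 * (1 - Real.cos (φ x)) ≤ 6 * M^2 / (h-1) * Wpot h (φ x) := by
      calc _ = 6 * M^2 / (h-1) * ((h-1) * (1 - Real.cos (φ x))) := by field_simp
        _ ≤ _ := by gcongr
    have h2 : 0 ≤ 6 * M^2 / (h-1) := by positivity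
    have h3 := Wpot_nonneg hh (φ x)
    rw [hK₀]
    nlinarith [sq_nonneg (deriv φ x), mul_nonneg h2 (sq_nonneg (deriv φ x)), mul_nonneg h2 h3]
  have hdr : ∀ x ∈ Set.Ioi (a+1), dens h ψ x ≤ 0 := by
    intro x hx
    have : ψ =ᶠ[𝓝 x] fun _ => 2 * Real.pi * n := by
      filter_upwards [Ioi_mem_nhds hx] with y hy using hψr y (le_of_lt hy)
    rw [dens, this.deriv_eq, deriv_const, hψr x (le_of_lt hx), Wpot_eq hh, cos_two_pi_mul_int]
    simp
  have split : ∀ F : ℝ → ℝ≥0∞, ∫⁻ x, F x = (∫⁻ x in Set.Iio a, F x) +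
      ((∫⁻ x in Set.Icc a (a+1), F x) + ∫⁻ x in Set.Ici (a+1), F x) := by
    intro F
    rw [← lintegral_Ici_split, ← lintegral_add_compl F (measurableSet_Iio (a := a)), Set.compl_Iio]
  set I := ∫⁻ x in Set.Iio a, dens h φ x with hI
  set B := ∫⁻ x in Set.Icc a (a+1), dens h φ x with hB
  set T := ∫⁻ x in Set.Ici (a+1), dens h φ x with hT
  have hloc : ∫⁻ x, dens h ψ x ≤ I + ENNReal.ofReal K₀ * B := by
    rw [split, ← setLIntegral_congr (Ioi_ae_eq_Ici (a := a+1))]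
    have h1 := setLIntegral_mono' measurableSet_Iio hdl (μ := volume)
    have h2 := setLIntegral_mono' measurableSet_Icc hdm' (μ := volume)
    have h3 := setLIntegral_mono' measurableSet_Ioi hdr (μ := volume)
    rw [lintegral_const_mul _ hdm] at h2
    rw [lintegral_zero] at h3
    calc _ ≤ I + (ENNReal.ofReal K₀ * B + 0) := by gcongr
      _ = _ := by rw [add_zero]
  have hnl := hA₁ a haA₁ ψ hcos
  set N := ∫⁻ x in Set.Ioi a, ENNReal.ofReal (1 - Real.cos (φ x)) with hN
  have hNT : ENNReal.ofReal (2*(h-1)) * N ≤ B + T := by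
    rw [hB, hT, ← lintegral_Ici_split, ← setLIntegral_congr (Ioi_ae_eq_Ici (a := a)), hN]
    have : Measurable φ := hφ.continuous.measurable
    rw [← lintegral_const_mul _ (by fun_prop)]
    exact lintegral_mono fun x => two_mul_one_sub_cos_le_dens hh φ x
  have hsmall : ENNReal.ofReal (1/(4*Real.pi)) * (8 * (ENNReal.ofReal ((h-1)/8) * N)) ≤
      ENNReal.ofReal (1/4) * (B + T) := by
    refine le_trans ?_ (mul_le_mul_right hNT _)
    rw [← mul_assoc, ← mul_assoc, ← mul_assoc]
    refine mul_le_mul_left ?_ N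
    rw [show (8:ℝ≥0∞) = ENNReal.ofReal 8 by simp, ← ENNReal.ofReal_mul (by positivity),
      ← ENNReal.ofReal_mul (by positivity), ← ENNReal.ofReal_mul (by positivity)]
    apply ENNReal.ofReal_le_ofReal
    have : 1/(4*Real.pi) ≤ 1/4 := by
      apply one_div_le_one_div_of_le (by norm_num); linarith [Real.pi_gt_three]
    calc _ = 1/(4*Real.pi) * (h-1) := by ring
      _ ≤ 1/4 * (h-1) := by gcongr
      _ ≤ _ := by nlinarith
  refine ⟨ψ, hψC, hψl, hψr, ?_⟩
  have hhalf : ENNReal.ofReal (1/2) = ENNReal.ofReal (1/4) + ENNReal.ofReal (1/4) := by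
    rw [← ENNReal.ofReal_add (by norm_num) (by norm_num)]; norm_num
  have hhalf1 : ENNReal.ofReal (1/2) ≤ 1 := by
    rw [ENNReal.ofReal_le_one]; norm_num
  have hq1 : ENNReal.ofReal (1/4) ≤ 1 := by
    rw [ENNReal.ofReal_le_one]; norm_num
  rw [energy_eq, energy_eq, split (dens h φ)]
  calc ENNReal.ofReal (1/2) * (∫⁻ x, dens h ψ x) + ENNReal.ofReal (1/(4*Real.pi)) * nonloc ψ +
        ENNReal.ofReal (1/4) * T
      ≤ ENNReal.ofReal (1/2) * (I + ENNReal.ofReal K₀ * B) + ENNReal.ofReal (1/(4*Real.pi)) *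
        (nonloc φ + 8 * (ENNReal.ofReal ((h-1)/8) * N)) + ENNReal.ofReal (1/4) * T := by gcongr
    _ = ENNReal.ofReal (1/2) * I + ENNReal.ofReal (1/2) * (ENNReal.ofReal K₀ * B) +
        ENNReal.ofReal (1/(4*Real.pi)) * nonloc φ + ENNReal.ofReal (1/(4*Real.pi)) *
        (8 * (ENNReal.ofReal ((h-1)/8) * N)) + ENNReal.ofReal (1/4) * T := by ring
    _ ≤ ENNReal.ofReal (1/2) * I + 1 * (ENNReal.ofReal K₀ * B) +
        ENNReal.ofReal (1/(4*Real.pi)) * nonloc φ + ENNReal.ofReal (1/4) * (B + T) +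
        ENNReal.ofReal (1/4) * T := by gcongr
    _ = ENNReal.ofReal (1/2) * (I + T) + ENNReal.ofReal (1/(4*Real.pi)) * nonloc φ +
        (ENNReal.ofReal K₀ * B + ENNReal.ofReal (1/4) * B) := by rw [hhalf]; ring
    _ ≤ ENNReal.ofReal (1/2) * (I + (B + T)) + ENNReal.ofReal (1/(4*Real.pi)) * nonloc φ +
        (ENNReal.ofReal K₀ * B + 1 * B) := by
        gcongr
        exact le_add_self
    _ = _ := by
        rw [ENNReal.coe_add, ENNReal.coe_one, add_mul]
        rfl

/-! ### The gain from the nonlocal attraction -/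

/-- A phase joining two different multiples of `2π` satisfies `1 - cos φ ≥ 1` on some interval. -/
lemma exists_core {φ : ℝ → ℝ} (hφ : Continuous φ) {n m : ℤ} (hnm : m < n)
    (hp : Tendsto φ atTop (𝓝 (2 * Real.pi * n))) (hm : Tendsto φ atBot (𝓝 (2 * Real.pi * m))) :
    ∃ x δ : ℝ, 0 < δ ∧ ∀ y, |y - x| ≤ δ → 1 ≤ 1 - Real.cos (φ y) := by
  have hpi := Real.pi_pos
  have hnm' : (m:ℝ) + 1 ≤ n := by exact_mod_cast hnm
  have h1 : ∃ a, φ a ≤ 2 * Real.pi * m + Real.pi :=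
    (hm.eventually (ge_mem_nhds (by linarith))).exists
  have h2 : ∃ b, 2 * Real.pi * m + Real.pi ≤ φ b :=
    (hp.eventually (le_mem_nhds (by nlinarith))).exists
  obtain ⟨x, hx⟩ := mem_range_of_exists_le_of_exists_ge hφ h1 h2
  have hcx : Real.cos (φ x) = -1 := by
    rw [hx, show 2 * Real.pi * (m:ℝ) = m * (2 * Real.pi) by ring, add_comm,
      Real.cos_add_int_mul_two_pi, Real.cos_pi]
  have hev : ∀ᶠ y in 𝓝 x, Real.cos (φ y) < 0 :=
    (Real.continuous_cos.comp hφ).continuousAt.eventually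
      (gt_mem_nhds (by simp only [Function.comp, hcx]; norm_num))
  obtain ⟨δ, hδ, hb⟩ := Metric.eventually_nhds_iff.1 hev
  refine ⟨x, δ/2, by positivity, fun y hy => ?_⟩
  have := hb (y := y) (by rw [Real.dist_eq]; linarith)
  linarith

/-- Lower bound for the interaction of two profiles that are at least `1` on intervals of width
`2δ`. -/
lemma interaction_ge {f g : ℝ → ℝ} {u v δ R : ℝ} (hδ : 0 < δ)
    (hf : ∀ y, |y - u| ≤ δ → 1 ≤ f y) (hg : ∀ y, |y - v| ≤ δ → 1 ≤ g y)
    (huv : u + δ < v - δ) (hR : v - u + 2 * δ ≤ R) :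
    ENNReal.ofReal (4 * δ^2 / R^2) ≤
      ∫⁻ s : ℝ, ∫⁻ t : ℝ, ENNReal.ofReal ((f s * g t) / (s - t)^2) := by
  have hR0 : 0 < R := by linarith
  have hI : ∀ w y : ℝ, y ∈ Set.Icc (w - δ) (w + δ) → |y - w| ≤ δ := by
    intro w y hy
    rw [abs_le]; exact ⟨by linarith [hy.1], by linarith [hy.2]⟩
  have hpt : ∀ s ∈ Set.Icc (u - δ) (u + δ), ∀ t ∈ Set.Icc (v - δ) (v + δ),
      ENNReal.ofReal (1/R^2) ≤ ENNReal.ofReal ((f s * g t) / (s - t)^2) := by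
    intro s hs t ht
    apply ENNReal.ofReal_le_ofReal
    have h1 := hf s (hI u s hs)
    have h2 := hg t (hI v t ht)
    have h3 : 0 < t - s := by linarith [hs.2, ht.1]
    have h4 : t - s ≤ R := by linarith [hs.1, ht.2]
    apply div_le_div₀ (by nlinarith) (by nlinarith) (by nlinarith)
    nlinarith
  have hvol : ∀ w : ℝ, volume (Set.Icc (w - δ) (w + δ)) = ENNReal.ofReal (2 * δ) := by
    intro w; rw [Real.volume_Icc]; congr 1; ring
  calc ENNReal.ofReal (4 * δ^2 / R^2)
      = ∫⁻ _ in Set.Icc (u - δ) (u + δ), ∫⁻ _ in Set.Icc (v - δ) (v + δ),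
          ENNReal.ofReal (1/R^2) := by
        rw [setLIntegral_const, setLIntegral_const, hvol, hvol, ← ENNReal.ofReal_mul (by positivity),
          ← ENNReal.ofReal_mul (by positivity)]
        congr 1; ring
    _ ≤ ∫⁻ s in Set.Icc (u - δ) (u + δ), ∫⁻ t : ℝ, ENNReal.ofReal ((f s * g t) / (s - t)^2) := by
        refine setLIntegral_mono' measurableSet_Icc fun s hs => ?_
        refine (setLIntegral_mono' measurableSet_Icc fun t ht => hpt s hs t ht).trans ?_
        exact setLIntegral_le_lintegral _ _
    _ ≤ _ := setLIntegral_le_lintegral _ _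

/-- The tails `t n` would decay geometrically, which is incompatible with a gain of order
`1/n²`. -/
lemma no_decay {t : ℕ → ℝ} {K c R : ℝ} (ht : ∀ n, 0 ≤ t n) (hK : 0 < K) (hc : 0 < c) (hR : 0 < R)
    (hrec : ∀ n : ℕ, c / (2 * n + R)^2 + 1/4 * t (n+1) ≤ K * (t n - t (n+1))) : False := by
  set θ := K / (K + 1/4) with hθ
  have hθ0 : 0 < θ := by positivity
  have hθ1 : θ < 1 := by rw [hθ, div_lt_one (by positivity)]; linarith
  have hgeo : ∀ n, t n ≤ θ^n * t 0 := by
    intro n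
    induction n with
    | zero => simp
    | succ n ih =>
      have h1 := hrec n
      have h2 : 0 ≤ c / (2 * n + R)^2 := by positivity
      have h3 : t (n+1) ≤ θ * t n := by
        rw [hθ, div_mul_eq_mul_div, le_div_iff₀ (by positivity)]
        linarith
      calc t (n+1) ≤ θ * t n := h3
        _ ≤ θ * (θ^n * t 0) := by gcongr
        _ = _ := by ring
  have hbound : ∀ n : ℕ, c ≤ K * t 0 * (4 * ((n:ℝ)^2 * θ^n) + 4 * R * ((n:ℝ)^1 * θ^n) +
      R^2 * ((n:ℝ)^0 * θ^n)) := by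
    intro n
    have h1 := hrec n
    have hpos : 0 < (2 * (n:ℝ) + R)^2 := by positivity
    have h2 : c / (2 * n + R)^2 ≤ K * t n := by nlinarith [ht (n+1)]
    rw [div_le_iff₀ hpos] at h2
    calc c ≤ K * t n * (2 * n + R)^2 := h2
      _ ≤ K * (θ^n * t 0) * (2 * n + R)^2 := by gcongr; exact hgeo n
      _ = _ := by ring
  have habs : |θ| < 1 := by rwa [abs_of_pos hθ0]
  have hlim := ((((tendsto_pow_const_mul_const_pow_of_abs_lt_one 2 habs).const_mul 4).add
    ((tendsto_pow_const_mul_const_pow_of_abs_lt_one 1 habs).const_mul (4 * R))).add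
    ((tendsto_pow_const_mul_const_pow_of_abs_lt_one 0 habs).const_mul (R^2))).const_mul (K * t 0)
  have := ge_of_tendsto' hlim hbound
  simp at this
  linarith

/-! ### Strict subadditivity -/

/-- Two phases that are constant to the right of `a + 1` are joined: `ψ₁` is shifted to the left by
`a + 2`, and `ψ₂` is reflected and placed on its right. If both have a core of width `2δ` and the
cores end up within distance `R`, the result gains an energy of order `δ² / R²`. -/
lemma Einf_add_le {h : ℝ} (hh : 1 < h) {ψ₁ ψ₂ : ℝ → ℝ} (h₁ : ContDiff ℝ 1 ψ₁)
    (h₂ : ContDiff ℝ 1 ψ₂) {n₁ m₁ n₂ m₂ : ℤ} {d a : ℝ}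
    (hm₁ : Tendsto ψ₁ atBot (𝓝 (2 * Real.pi * m₁))) (hr₁ : ∀ x, a + 1 ≤ x → ψ₁ x = 2 * Real.pi * n₁)
    (hm₂ : Tendsto ψ₂ atBot (𝓝 (2 * Real.pi * m₂))) (hr₂ : ∀ x, a + 1 ≤ x → ψ₂ x = 2 * Real.pi * n₂)
    (hd : d = n₁ - m₁ + (n₂ - m₂)) (hf₁ : energy h ψ₁ < ⊤) (hf₂ : energy h ψ₂ < ⊤)
    {x₁ x₂ δ R : ℝ} (hδ : 0 < δ) (hx₁ : ∀ y, |y - x₁| ≤ δ → 1 ≤ 1 - Real.cos (ψ₁ y))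
    (hx₂ : ∀ y, |y - x₂| ≤ δ → 1 ≤ 1 - Real.cos (ψ₂ y))
    (hxa : x₁ + x₂ + 2 * δ < 2 * a + 4) (hR : 2 * a + 4 - x₁ - x₂ + 2 * δ ≤ R) :
    Einf h d + ENNReal.ofReal (1/(4*Real.pi)) * ENNReal.ofReal (4 * δ^2 / R^2) ≤
      energy h ψ₁ + energy h ψ₂ := by
  set p : ℝ → ℝ := fun x => ψ₁ (x + (a + 2)) with hp
  set q : ℝ → ℝ := fun x => -ψ₂ (a + 2 - x) with hq
  have hpC : ContDiff ℝ 1 p := h₁.comp (contDiff_id.add contDiff_const)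
  have hqC : ContDiff ℝ 1 q := (h₂.comp (contDiff_const.sub contDiff_id)).neg
  have hpr : ∀ x, -1 < x → p x = 2 * Real.pi * n₁ := fun x hx => hr₁ _ (by linarith)
  have hql : ∀ x, x < 1 → q x = 2 * Real.pi * (-n₂ : ℤ) := fun x hx => by
    simp only [hq]; rw [hr₂ _ (by linarith)]; push_cast; ring
  have hglue := energy_glue hh hpC hqC n₁ (-n₂) hpr hql
  have hfinite : ENNReal.ofReal (4 * δ^2 / R^2) ≤ _ :=
    interaction_ge (f := fun s => 1 - Real.cos (p s)) (g := fun t => 1 - Real.cos (q t))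
      (u := x₁ - (a + 2)) (v := a + 2 - x₂) (R := R) hδ
      (fun y hy => hx₁ _ (by rwa [show y + (a + 2) - x₁ = y - (x₁ - (a + 2)) by ring]))
      (fun y hy => by
        simp only [hq, Real.cos_neg]
        exact hx₂ _ (by
          rwa [show a + 2 - y - x₂ = -(y - (a + 2 - x₂)) by ring, abs_neg]))
      (by linarith) (by linarith)
  have hEp : energy h p = energy h ψ₁ := energy_translate h ψ₁ (a + 2)
  have hEq : energy h q = energy h ψ₂ := energy_reflect h ψ₂ (a + 2)
  rw [hEp, hEq] at hglue
  have hE := (add_le_add_right (mul_le_mul_right hfinite (ENNReal.ofReal (1/(4*Real.pi)))) _).trans hglue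
  have hfin : energy h (fun x => p x + q x) < ⊤ :=
    (le_self_add.trans hE).trans_lt (ENNReal.add_lt_top.2 ⟨hf₁, hf₂⟩)
  have hqtop : Tendsto q atTop (𝓝 (-(2 * Real.pi * m₂))) := by
    refine (hm₂.comp ?_).neg
    exact tendsto_atBot_add_const_left _ _ tendsto_neg_atTop_atBot
  have hpbot : Tendsto p atBot (𝓝 (2 * Real.pi * m₁)) :=
    hm₁.comp (tendsto_atBot_add_const_right _ _ tendsto_id)
  have htop : Tendsto (fun x => p x + q x) atTop (𝓝 (2 * Real.pi * (n₁ - m₂ : ℤ))) := by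
    have : Tendsto p atTop (𝓝 (2 * Real.pi * n₁)) :=
      tendsto_const_nhds.congr' (by
        filter_upwards [eventually_gt_atTop (-1)] with x hx using (hpr x hx).symm)
    convert this.add hqtop using 2
    push_cast; ring
  have hbot : Tendsto (fun x => p x + q x) atBot (𝓝 (2 * Real.pi * (m₁ - n₂ : ℤ))) := by
    have : Tendsto q atBot (𝓝 (2 * Real.pi * (-n₂ : ℤ))) :=
      tendsto_const_nhds.congr' (by
        filter_upwards [eventually_lt_atBot 1] with x hx using (hql x hx).symm)
    convert hpbot.add this using 2
    push_cast; ring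
  have hmem : (fun x => p x + q x) ∈ AA h d := by
    refine ⟨⟨hpC.add hqC, ⟨_, mem_limSet hh _, htop⟩, ⟨_, mem_limSet hh _, hbot⟩, hfin⟩, ?_⟩
    rw [deg, htop.limUnder_eq, hbot.limUnder_eq, hd]
    have := Real.pi_ne_zero
    push_cast
    field_simp
    ring
  refine le_trans ?_ hE
  gcongr
  exact iInf₂_le _ hmem


/-! ### Contradiction between truncation cost and attraction -/

/-- A phase in `𝒜_h(d)` connects two integer multiples of `2π`. -/
lemma AA_limits {h d : ℝ} (hh : 1 < h) {φ : ℝ → ℝ} (hφ : φ ∈ AA h d) :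
    ∃ m n : ℤ, Tendsto φ atTop (𝓝 (2 * Real.pi * n)) ∧ Tendsto φ atBot (𝓝 (2 * Real.pi * m)) ∧
      d = n - m := by
  obtain ⟨⟨-, ⟨L, hL, hLt⟩, ⟨L', hL', hLt'⟩, -⟩, hdeg⟩ := hφ
  obtain ⟨n, rfl⟩ := limSet_eq hh hL
  obtain ⟨m, rfl⟩ := limSet_eq hh hL'
  refine ⟨m, n, hLt, hLt', ?_⟩
  rw [← hdeg, deg, hLt.limUnder_eq, hLt'.limUnder_eq]
  field_simp

/-- Two phases of finite energy and positive winding can be truncated on the right and joined, the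
second one reflected, at a total cost strictly below the sum of their energies. -/
lemma Einf_add_lt {h : ℝ} (hh : 1 < h) {φ₁ φ₂ : ℝ → ℝ} (hC₁ : ContDiff ℝ 1 φ₁)
    (hC₂ : ContDiff ℝ 1 φ₂) (hE₁ : energy h φ₁ < ⊤) (hE₂ : energy h φ₂ < ⊤) {m₁ n₁ m₂ n₂ : ℤ}
    (hp₁ : Tendsto φ₁ atTop (𝓝 (2 * Real.pi * n₁))) (hm₁ : Tendsto φ₁ atBot (𝓝 (2 * Real.pi * m₁)))
    (hp₂ : Tendsto φ₂ atTop (𝓝 (2 * Real.pi * n₂))) (hm₂ : Tendsto φ₂ atBot (𝓝 (2 * Real.pi * m₂)))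
    (h₁ : m₁ < n₁) (h₂ : m₂ < n₂) {d : ℝ} (hd : d = n₁ - m₁ + (n₂ - m₂)) :
    Einf h d < energy h φ₁ + energy h φ₂ := by
  by_contra hcon
  rw [not_lt] at hcon
  obtain ⟨x₁, δ₁, hδ₁, hx₁⟩ := exists_core hC₁.continuous h₁ hp₁ hm₁
  obtain ⟨x₂, δ₂, hδ₂, hx₂⟩ := exists_core hC₂.continuous h₂ hp₂ hm₂
  set δ := min δ₁ δ₂ with hδdef
  have hδ : 0 < δ := lt_min hδ₁ hδ₂
  obtain ⟨K₁, A₁, hA₁⟩ := exists_trunc hh hC₁ hE₁ n₁ hp₁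
  obtain ⟨K₂, A₂, hA₂⟩ := exists_trunc hh hC₂ hE₂ n₂ hp₂
  set A := max (max A₁ A₂) (|x₁| + |x₂| + δ) with hA
  have hAA₁ : A₁ ≤ A := (le_max_left _ _).trans (le_max_left _ _)
  have hAA₂ : A₂ ≤ A := (le_max_right _ _).trans (le_max_left _ _)
  have hAx : |x₁| + |x₂| + δ ≤ A := le_max_right _ _
  have a1 := abs_nonneg x₁
  have a2 := abs_nonneg x₂
  have b1 := neg_abs_le x₁
  have b2 := neg_abs_le x₂
  have c1 := le_abs_self x₁
  have c2 := le_abs_self x₂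
  set R := 2 * A + 4 + |x₁| + |x₂| + 2 * δ with hR
  set T : ℝ → ℝ≥0∞ := fun a => (∫⁻ x in Set.Ici a, dens h φ₁ x) + ∫⁻ x in Set.Ici a, dens h φ₂ x
    with hT
  set B : ℝ → ℝ≥0∞ := fun a => (∫⁻ x in Set.Icc a (a+1), dens h φ₁ x) +
    ∫⁻ x in Set.Icc a (a+1), dens h φ₂ x with hB
  have hTB : ∀ a, T a = B a + T (a+1) := by
    intro a
    simp only [hT, hB]
    rw [lintegral_Ici_split _ a, lintegral_Ici_split (dens h φ₂) a]
    ring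
  have hTfin : ∀ a, T a ≠ ⊤ := fun a => ENNReal.add_ne_top.2
    ⟨ne_top_of_le_ne_top (lintegral_dens_ne_top hE₁) (setLIntegral_le_lintegral _ _),
     ne_top_of_le_ne_top (lintegral_dens_ne_top hE₂) (setLIntegral_le_lintegral _ _)⟩
  have hBfin : ∀ a, B a ≠ ⊤ := fun a => by
    have := hTfin a
    rw [hTB a, ENNReal.add_ne_top] at this
    exact this.1
  have key : ∀ k : ℕ, ENNReal.ofReal (1/(4*Real.pi)) * ENNReal.ofReal (4*δ^2/(2*k+R)^2) +
      ENNReal.ofReal (1/4) * T (A + k + 1) ≤ ((K₁ + K₂ + 1 : ℝ≥0) : ℝ≥0∞) * B (A + k) := by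
    intro k
    have hk : (0:ℝ) ≤ k := k.cast_nonneg
    set a := A + (k:ℝ) with ha
    obtain ⟨ψ₁, hψC₁, hψl₁, hψr₁, hψE₁⟩ := hA₁ a (by linarith)
    obtain ⟨ψ₂, hψC₂, hψl₂, hψr₂, hψE₂⟩ := hA₂ a (by linarith)
    have hB1 : ∫⁻ x in Set.Icc a (a+1), dens h φ₁ x ≠ ⊤ := (ENNReal.add_ne_top.1 (hBfin a)).1
    have hB2 : ∫⁻ x in Set.Icc a (a+1), dens h φ₂ x ≠ ⊤ := (ENNReal.add_ne_top.1 (hBfin a)).2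
    have hf₁ : energy h ψ₁ < ⊤ := lt_of_le_of_lt (le_self_add.trans hψE₁)
      (ENNReal.add_lt_top.2 ⟨hE₁, ENNReal.mul_lt_top ENNReal.coe_lt_top hB1.lt_top⟩)
    have hf₂ : energy h ψ₂ < ⊤ := lt_of_le_of_lt (le_self_add.trans hψE₂)
      (ENNReal.add_lt_top.2 ⟨hE₂, ENNReal.mul_lt_top ENNReal.coe_lt_top hB2.lt_top⟩)
    have hmψ₁ : Tendsto ψ₁ atBot (𝓝 (2 * Real.pi * m₁)) :=
      hm₁.congr' ((eventually_le_atBot a).mono fun x hx => (hψl₁ x hx).symm)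
    have hmψ₂ : Tendsto ψ₂ atBot (𝓝 (2 * Real.pi * m₂)) :=
      hm₂.congr' ((eventually_le_atBot a).mono fun x hx => (hψl₂ x hx).symm)
    have hglue := Einf_add_le hh hψC₁ hψC₂ hmψ₁ hψr₁ hmψ₂ hψr₂ hd hf₁ hf₂ hδ
      (x₁ := x₁) (x₂ := x₂) (R := 2*k+R)
      (fun y hy => by
        have := (abs_le.1 hy).2
        rw [hψl₁ y (by linarith)]
        exact hx₁ y (hy.trans (min_le_left _ _)))
      (fun y hy => by
        have := (abs_le.1 hy).2
        rw [hψl₂ y (by linarith)]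
        exact hx₂ y (hy.trans (min_le_right _ _)))
      (by linarith) (by rw [hR, ha]; linarith)
    set G := ENNReal.ofReal (1/(4*Real.pi)) * ENNReal.ofReal (4*δ^2/(2*k+R)^2) with hG
    have hsum : (energy h φ₁ + energy h φ₂) + (G + ENNReal.ofReal (1/4) * T (a+1)) ≤
        (energy h φ₁ + energy h φ₂) + ((K₁ + K₂ + 1 : ℝ≥0) : ℝ≥0∞) * B a := by
      calc _ ≤ Einf h d + (G + ENNReal.ofReal (1/4) * T (a+1)) := by gcongr
        _ = Einf h d + G + ENNReal.ofReal (1/4) * T (a+1) := by rw [add_assoc (Einf h d)]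
        _ ≤ energy h ψ₁ + energy h ψ₂ + ENNReal.ofReal (1/4) * T (a+1) := by gcongr
        _ = (energy h ψ₁ + ENNReal.ofReal (1/4) * ∫⁻ x in Set.Ici (a+1), dens h φ₁ x) +
            (energy h ψ₂ + ENNReal.ofReal (1/4) * ∫⁻ x in Set.Ici (a+1), dens h φ₂ x) := by
            simp only [hT]; ring
        _ ≤ (energy h φ₁ + K₁ * ∫⁻ x in Set.Icc a (a+1), dens h φ₁ x) +
            (energy h φ₂ + K₂ * ∫⁻ x in Set.Icc a (a+1), dens h φ₂ x) := add_le_add hψE₁ hψE₂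
        _ ≤ (energy h φ₁ + ((K₁ + K₂ + 1 : ℝ≥0) : ℝ≥0∞) *
              ∫⁻ x in Set.Icc a (a+1), dens h φ₁ x) +
            (energy h φ₂ + ((K₁ + K₂ + 1 : ℝ≥0) : ℝ≥0∞) *
              ∫⁻ x in Set.Icc a (a+1), dens h φ₂ x) := by
            have e1 : (K₁ : ℝ≥0∞) ≤ ((K₁ + K₂ + 1 : ℝ≥0) : ℝ≥0∞) :=
              ENNReal.coe_le_coe.2 (by rw [add_assoc]; exact le_self_add)
            have e2 : (K₂ : ℝ≥0∞) ≤ ((K₁ + K₂ + 1 : ℝ≥0) : ℝ≥0∞) :=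
              ENNReal.coe_le_coe.2 (by rw [add_right_comm]; exact le_add_self)
            exact add_le_add (add_le_add le_rfl (mul_le_mul_left e1 _))
              (add_le_add le_rfl (mul_le_mul_left e2 _))
        _ = _ := by simp only [hB]; ring
    exact (ENNReal.add_le_add_iff_left (ENNReal.add_lt_top.2 ⟨hE₁, hE₂⟩).ne).1 hsum
  refine no_decay (t := fun k => (T (A + k)).toReal) (K := ((K₁ + K₂ + 1 : ℝ≥0) : ℝ))
    (c := 1/(4*Real.pi) * (4*δ^2)) (R := R) (fun k => ENNReal.toReal_nonneg) ?_ ?_ ?_ ?_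
  · push_cast
    positivity
  · positivity
  · rw [hR]; linarith
  · intro k
    have hpi := Real.pi_pos
    have hk := key k
    have hT1 := hTfin (A + k + 1)
    have hfin : ((K₁ + K₂ + 1 : ℝ≥0) : ℝ≥0∞) * B (A + k) ≠ ⊤ :=
      ENNReal.mul_ne_top ENNReal.coe_ne_top (hBfin _)
    have hk' := ENNReal.toReal_mono hfin hk
    rw [ENNReal.toReal_add (ENNReal.mul_ne_top ENNReal.ofReal_ne_top ENNReal.ofReal_ne_top)
      (ENNReal.mul_ne_top ENNReal.ofReal_ne_top hT1), ENNReal.toReal_mul, ENNReal.toReal_mul,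
      ENNReal.toReal_mul, ENNReal.toReal_ofReal (by positivity),
      ENNReal.toReal_ofReal (by positivity), ENNReal.toReal_ofReal (by norm_num),
      ENNReal.coe_toReal] at hk'
    have hdiff : (T (A + k)).toReal = (B (A + k)).toReal + (T (A + k + 1)).toReal := by
      rw [hTB, ENNReal.toReal_add (hBfin _) hT1]
    have hcast : A + ((k + 1 : ℕ) : ℝ) = A + k + 1 := by push_cast; ring
    simp only [hcast]
    rw [hdiff, add_sub_cancel_right, mul_div_assoc]
    exact hk'

/-- **Strict subadditivity for `h > 1`.** -/
theorem strict_subadditivity_h_gt_one (h : ℝ) (hh : 1 < h) (d₁ d₂ : ℕ)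
    (hd₁ : 1 ≤ d₁) (hd₂ : 1 ≤ d₂)
    (hatt₁ : ∃ φ ∈ AA h (d₁ : ℝ), energy h φ = Einf h (d₁ : ℝ))
    (hatt₂ : ∃ φ ∈ AA h (d₂ : ℝ), energy h φ = Einf h (d₂ : ℝ)) :
    Einf h ((d₁ : ℝ) + (d₂ : ℝ)) < Einf h (d₁ : ℝ) + Einf h (d₂ : ℝ) := by
  obtain ⟨φ₁, hφ₁, he₁⟩ := hatt₁
  obtain ⟨φ₂, hφ₂, he₂⟩ := hatt₂
  obtain ⟨m₁, n₁, hp₁, hm₁, hdeg₁⟩ := AA_limits hh hφ₁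
  obtain ⟨m₂, n₂, hp₂, hm₂, hdeg₂⟩ := AA_limits hh hφ₂
  have lt_of {d : ℕ} {m n : ℤ} (hd : 1 ≤ d) (hdeg : (d:ℝ) = n - m) : m < n := by
    have : (1:ℝ) ≤ d := by exact_mod_cast hd
    have : (m:ℝ) < n := by linarith
    exact_mod_cast this
  -- The reflection `x ↦ -φ₂ (-x)` keeps energy and degree and turns the left end of `φ₂` into a
  -- right end.
  have hr : energy h (fun x => -φ₂ (0 - x)) = energy h φ₂ := energy_reflect h φ₂ 0
  have hsubB : Tendsto (fun x : ℝ => 0 - x) atBot atTop := by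
    simpa using tendsto_neg_atBot_atTop (G := ℝ)
  have hsubT : Tendsto (fun x : ℝ => 0 - x) atTop atBot := by
    simpa using tendsto_neg_atTop_atBot (G := ℝ)
  rw [← he₁, ← he₂, ← hr]
  refine Einf_add_lt hh hφ₁.1.1 ?_ hφ₁.1.2.2.2 (by rw [hr]; exact hφ₂.1.2.2.2) hp₁ hm₁
    (n₂ := -m₂) (m₂ := -n₂) ?_ ?_ (lt_of hd₁ hdeg₁) (neg_lt_neg (lt_of hd₂ hdeg₂)) ?_
  · exact (hφ₂.1.1.comp (contDiff_const.sub contDiff_id)).neg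
  · have := (hm₂.comp hsubT).neg
    simpa [Function.comp_def] using this
  · have := (hp₂.comp hsubB).neg
    simpa [Function.comp_def] using this
  · rw [hdeg₁, hdeg₂]; push_cast; ring
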